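/- arXiv:2002.10704 — 2 statements merged into one kernel-verified Lean document; each statement's English description precedes it below -/
import Mathlib

section
/- Let f_1,…,f_n be additive dichotomous valuations on a finite item set M (so f_i(S) = |S ∩ D_i| for demand sets D_i ⊆ M) and let A be a Lorenz dominating allocation. Then A is maximin fair: for every agent i, f_i(A_i) is at least the maximin share of agent i. -/
open Finset
open scoped Classical

variable {n : ℕ} {I : Type*} [DecidableEq I] [Fintype I]

/-- An allocation assigns pairwise disjoint bundles of items to the agents
(items may remain unallocated). -/
def IsAllocation (A : Fin n → Finset I) : Prop :=
  ∀ i j : Fin n, i ≠ j → Disjoint (A i) (A j)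

/-- The vector of utilities of an allocation under a profile of valuations. -/
def util {α : Type*} (f : Fin n → Finset I → α) (A : Fin n → Finset I) : Fin n → α :=
  fun i => f i (A i)

/-- The entries of the vector `u`, sorted in nondecreasing order. -/
noncomputable def sortedVec {α : Type*} [LinearOrder α] (u : Fin n → α) : List α :=
  (Finset.univ.val.map u).sort (· ≤ ·)

/-- `u` Lorenz-dominates `v`: for each `k`, the sum of the `k` smallest entries of `u`
is at least the sum of the `k` smallest entries of `v`. -/
def LorenzGE {α : Type*} [LinearOrder α] [AddCommMonoid α] (u v : Fin n → α) : Prop :=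
  ∀ k : ℕ, ((sortedVec v).take k).sum ≤ ((sortedVec u).take k).sum

/-- A matroid rank function: a normalized submodular valuation with dichotomous marginals. -/
structure IsMRF (f : Finset I → ℕ) : Prop where
  empty : f ∅ = 0
  submod : ∀ S T : Finset I, S ⊆ T → ∀ a : I,
      f (insert a T) + f S ≤ f (insert a S) + f T
  dichot : ∀ (S : Finset I) (a : I), f (insert a S) = f S ∨ f (insert a S) = f S + 1

/-- Non-redundancy: removing any item from any agent's bundle strictly decreases its value. -/
def NonRedundant (f : Fin n → Finset I → ℕ) (A : Fin n → Finset I) : Prop :=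
  ∀ i : Fin n, ∀ a ∈ A i, f i ((A i).erase a) < f i (A i)

/-- A Lorenz dominating allocation. -/
def LorenzDominating (f : Fin n → Finset I → ℕ) (A : Fin n → Finset I) : Prop :=
  ∀ B : Fin n → Finset I, IsAllocation B → LorenzGE (util f A) (util f B)

/-- The σ-perturbed utilities: agent `i` gets `f i (A i) + σ(i)/n²`, where the priority
`σ(i)` ranges over `{1,…,n}`. -/
noncomputable def pUtil (σ : Equiv.Perm (Fin n)) (f : Fin n → Finset I → ℕ)
    (A : Fin n → Finset I) : Fin n → ℝ :=
  fun i => (f i (A i) : ℝ) + (((σ i : ℕ) : ℝ) + 1) / (n : ℝ) ^ 2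

/-- A σ-Lorenz dominating allocation. -/
def SigmaLorenzDom (σ : Equiv.Perm (Fin n)) (f : Fin n → Finset I → ℕ)
    (A : Fin n → Finset I) : Prop :=
  ∀ B : Fin n → Finset I, IsAllocation B → LorenzGE (pUtil σ f A) (pUtil σ f B)

/-- Restriction of a valuation to a subset `D` of the items. -/
def restrictVal (f : Finset I → ℕ) (D : Finset I) : Finset I → ℕ := fun S => f (S ∩ D)

/-- A partition of all the items into `n` (possibly empty) bundles. -/
def IsPartition (P : Fin n → Finset I) : Prop :=
  (∀ i j : Fin n, i ≠ j → Disjoint (P i) (P j)) ∧ ∀ a : I, ∃ j, a ∈ P j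

/-- An XOS valuation: the pointwise maximum of a finite nonempty family of
nonnegative additive valuations. -/
def IsXOS (f : Finset I → ℝ) : Prop :=
  ∃ (k : ℕ) (w : Fin (k + 1) → I → ℝ),
    (∀ t a, 0 ≤ w t a) ∧
    ∀ S : Finset I, f S = Finset.univ.sup' Finset.univ_nonempty (fun t => ∑ a ∈ S, w t a)

/-- A dichotomous valuation (real-valued version). -/
def IsDichotomousR (f : Finset I → ℝ) : Prop :=
  ∀ (S : Finset I) (a : I), f (insert a S) = f S ∨ f (insert a S) = f S + 1

/-- Envy-freeness up to one good. -/
def EF1 (f : Fin n → Finset I → ℝ) (A : Fin n → Finset I) : Prop :=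
  ∀ i j : Fin n, f i (A j) ≤ f i (A i) ∨ ∃ e ∈ A j, f i ((A j).erase e) ≤ f i (A i)

/-- The maximum welfare attainable by a set `S` of agents. -/
noncomputable def maxWelfare (f : Fin n → Finset I → ℕ) (S : Finset (Fin n)) : ℕ :=
  Finset.sup (Finset.univ.filter fun B : Fin n → Finset I => IsAllocation B)
    (fun B => ∑ j ∈ S, f j (B j))

/-- An allocation extended with index `none` for the set of unallocated items. -/
def extAlloc (A : Fin n → Finset I) : Option (Fin n) → Finset I
  | none => Finset.univ \ Finset.univ.biUnion A
  | some i => A i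

/-!
Suppose agent `i` demands an item `e` which is either unassigned, unwanted by its owner, or held by
an agent whose utility exceeds that of `i` by at least two. Giving `e` to `i` raises `i` and pushes
nobody down to the old level of `i`, which Lorenz domination forbids. So, writing `u` for the
utility of `i`, the demand set `D i` is covered by the demanded parts of the bundles of utility at
most `u + 1`. One of them, the bundle of `i` itself, has utility only `u`, whence
`#(D i) < n * (u + 1)`, and among any `n` disjoint bundles one is worth at most `u` to `i`.
-/

theorem sum_take_le_sum_of_sublist {α : Type*} [Preorder α] [AddMonoid α]
    [AddLeftMono α] [AddRightMono α] {l' l : List α}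
    (hl : l.Pairwise (· ≤ ·)) (hsub : l'.Sublist l) : (l.take l'.length).sum ≤ l'.sum := by
  induction l' generalizing l with
  | nil => simp
  | cons b t ih =>
    cases l with
    | nil => simp at hsub
    | cons a s =>
      obtain ⟨ha, hs⟩ := List.pairwise_cons.1 hl
      have hab : a ≤ b := by
        rcases List.mem_cons.1 (hsub.subset List.mem_cons_self) with rfl | hb
        exacts [le_rfl, ha b hb]
      simpa only [List.length_cons, List.take_succ_cons, List.sum_cons] using
        add_le_add hab (ih hs hsub.tail)

section SortedSums

variable {α : Type*} [LinearOrder α]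

theorem sortedVec_eq_append (u : Fin n → α) (T : Finset (Fin n))
    (hT : ∀ s ∈ T, ∀ t ∉ T, u s ≤ u t) :
    sortedVec u = (T.val.map u).sort (· ≤ ·) ++ (Tᶜ.val.map u).sort (· ≤ ·) := by
  refine List.Perm.eq_of_pairwise' (r := (· ≤ ·)) (Multiset.pairwise_sort _ _)
    (List.pairwise_append.2 ⟨Multiset.pairwise_sort _ _, Multiset.pairwise_sort _ _, ?_⟩) ?_
  · simp only [Multiset.mem_sort, Multiset.mem_map, mem_val, mem_compl]
    rintro _ ⟨s, hs, rfl⟩ _ ⟨t, ht, rfl⟩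
    exact hT s hs t ht
  · rw [← Multiset.coe_eq_coe, ← Multiset.coe_add, sortedVec, Multiset.sort_eq, Multiset.sort_eq,
      Multiset.sort_eq, ← Multiset.map_add, ← union_compl T,
      ← disjUnion_eq_union T Tᶜ disjoint_compl_right, disjUnion_val]

variable [AddCommMonoid α]

theorem sum_take_sortedVec_le [IsOrderedAddMonoid α] (u : Fin n → α) (T : Finset (Fin n)) :
    ((sortedVec u).take #T).sum ≤ ∑ i ∈ T, u i := by
  have hsub : ((T.val.map u).sort (· ≤ ·)).Sublist (sortedVec u) := by
    refine List.sublist_of_subperm_of_pairwise ?_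
      (Multiset.pairwise_sort _ _) (Multiset.pairwise_sort _ _)
    rw [← Multiset.coe_le, sortedVec, Multiset.sort_eq, Multiset.sort_eq]
    exact Multiset.map_le_map (val_le_iff.2 (subset_univ T))
  have h := sum_take_le_sum_of_sublist (Multiset.pairwise_sort _ _) hsub
  rwa [← Multiset.sum_coe (Multiset.sort _ _), Multiset.sort_eq, Multiset.length_sort,
    Multiset.card_map] at h

theorem sum_take_sortedVec_eq (u : Fin n → α) (T : Finset (Fin n))
    (hT : ∀ s ∈ T, ∀ t ∉ T, u s ≤ u t) :
    ((sortedVec u).take #T).sum = ∑ i ∈ T, u i := by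
  have hlen : #T = ((T.val.map u).sort (· ≤ ·)).length := by
    rw [Multiset.length_sort, Multiset.card_map, card_val]
  rw [sortedVec_eq_append u T hT, hlen, List.take_left, ← Multiset.sum_coe, Multiset.sort_eq]
  rfl

theorem LorenzGE.exists_lt_and_le_of_lt [IsOrderedCancelAddMonoid α] {u v : Fin n → α}
    (huv : LorenzGE u v) {i : Fin n} (hi : u i < v i) : ∃ l, v l < u l ∧ v l ≤ u i := by
  by_contra! hkeep
  -- Entries of `v` in `S` are no smaller than those of `u`, and all others exceed `u i`; so the
  -- `#S + 1` smallest entries of `v` have a larger sum than `u` has over `insert i S`.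
  set S : Finset (Fin n) := {l | v l ≤ u i} with hS
  have hmem (l : Fin n) : l ∈ S ↔ v l ≤ u i := by simp [hS]
  have hiS : i ∉ S := (hmem i).not.2 hi.not_ge
  obtain ⟨m, hmS, hm⟩ := Sᶜ.exists_min_image v ⟨i, mem_compl.2 hiS⟩
  replace hmS : m ∉ S := mem_compl.1 hmS
  have him : u i < v m := not_le.1 ((hmem m).not.1 hmS)
  have hlower : ∀ s ∈ insert m S, ∀ t ∉ insert m S, v s ≤ v t := by
    intro s hs t ht
    have hmt : v m ≤ v t := hm t (mem_compl.2 fun h => ht (mem_insert_of_mem h))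
    rcases mem_insert.1 hs with rfl | hsS
    exacts [hmt, (((hmem s).1 hsS).trans_lt him).le.trans hmt]
  have hkeepS : ∀ l ∈ S, u l ≤ v l := fun l hl =>
    not_lt.1 fun h => (hkeep l h).not_ge ((hmem l).1 hl)
  have hcard : #(insert m S) = #(insert i S) := by
    rw [card_insert_of_notMem hmS, card_insert_of_notMem hiS]
  refine (huv #(insert i S)).not_gt ?_
  calc ((sortedVec u).take #(insert i S)).sum
      ≤ ∑ l ∈ insert i S, u l := sum_take_sortedVec_le u _
    _ = u i + ∑ l ∈ S, u l := sum_insert hiS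
    _ < v m + ∑ l ∈ S, v l := add_lt_add_of_lt_of_le him (sum_le_sum hkeepS)
    _ = ∑ l ∈ insert m S, v l := (sum_insert hmS).symm
    _ = ((sortedVec v).take #(insert i S)).sum := by
      rw [← hcard, sum_take_sortedVec_eq v _ hlower]

end SortedSums

section Allocations

variable {I : Type*} [DecidableEq I]

/-- The allocation obtained from `A` by handing the item `e` to agent `i`, taking it away from its
owner if it has one. -/
def reassign (A : Fin n → Finset I) (e : I) (i : Fin n) : Fin n → Finset I :=
  Function.update (fun l => (A l).erase e) i (insert e (A i))

theorem isAllocation_reassign {A : Fin n → Finset I} (hA : IsAllocation A) (e : I) (i : Fin n) :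
    IsAllocation (reassign A e i) := by
  intro j l hjl
  have hdisj := disjoint_left.1 (hA j l hjl)
  refine disjoint_left.2 fun x => ?_
  simp only [reassign, Function.update_apply]
  split_ifs <;> grind

theorem IsAllocation.sum_card_inter_le {P : Fin n → Finset I} (hP : IsAllocation P)
    (E : Finset I) : ∑ j, #(P j ∩ E) ≤ #E := by
  rw [← card_biUnion fun j _ l _ hjl => (hP j l hjl).mono inter_subset_left inter_subset_left]
  exact card_le_card (biUnion_subset.2 fun j _ => inter_subset_right)

variable {D : Fin n → Finset I} {f : Fin n → Finset I → ℕ} {A : Fin n → Finset I}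

theorem LorenzDominating.exists_mem_inter_and_le_add_one (hLD : LorenzDominating f A)
    (hf : ∀ i S, f i S = #(S ∩ D i)) (hA : IsAllocation A) {i : Fin n} {e : I} (he : e ∈ D i) :
    ∃ l, e ∈ A l ∩ D l ∧ f l (A l) ≤ f i (A i) + 1 := by
  by_cases heA : e ∈ A i
  · exact ⟨i, mem_inter.2 ⟨heA, he⟩, Nat.le_succ _⟩
  have hgain : f i (A i) < f i (reassign A e i i) := by
    rw [hf, hf, reassign, Function.update_self, insert_inter_of_mem he,
      card_insert_of_notMem fun h => heA (mem_inter.1 h).1]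
    exact Nat.lt_succ_self _
  obtain ⟨l, hloss, hlevel⟩ :
      ∃ l, f l (reassign A e i l) < f l (A l) ∧ f l (reassign A e i l) ≤ f i (A i) :=
    (hLD _ (isAllocation_reassign hA e i)).exists_lt_and_le_of_lt hgain
  have hli : l ≠ i := by
    rintro rfl
    exact hloss.not_gt hgain
  have hbundle : f l (reassign A e i l) = #((A l ∩ D l).erase e) := by
    rw [hf, reassign, Function.update_of_ne hli, erase_inter]
  have heAl : e ∈ A l ∩ D l := by
    by_contra hel
    rw [hbundle, erase_eq_of_notMem hel, hf] at hloss
    exact hloss.false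
  refine ⟨l, heAl, ?_⟩
  calc f l (A l) = #((A l ∩ D l).erase e) + 1 := by rw [hf, card_erase_add_one heAl]
    _ ≤ f i (A i) + 1 := by rw [← hbundle]; exact Nat.succ_le_succ hlevel

theorem LorenzDominating.card_demand_lt (hLD : LorenzDominating f A)
    (hf : ∀ i S, f i S = #(S ∩ D i)) (hA : IsAllocation A) (i : Fin n) :
    #(D i) < n * (f i (A i) + 1) := by
  set L : Finset (Fin n) := {l | f l (A l) ≤ f i (A i) + 1} with hL
  have hmem (l : Fin n) : l ∈ L ↔ f l (A l) ≤ f i (A i) + 1 := by simp [hL]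
  have hcover : D i ⊆ L.biUnion fun l => A l ∩ D l := fun e he =>
    let ⟨l, hel, hl⟩ := hLD.exists_mem_inter_and_le_add_one hf hA he
    mem_biUnion.2 ⟨l, (hmem l).2 hl, hel⟩
  calc #(D i) ≤ #(L.biUnion fun l => A l ∩ D l) := card_le_card hcover
    _ ≤ ∑ l ∈ L, #(A l ∩ D l) := card_biUnion_le
    _ = ∑ l ∈ L, f l (A l) := sum_congr rfl fun l _ => (hf l (A l)).symm
    _ < ∑ _l ∈ L, (f i (A i) + 1) := sum_lt_sum (fun l hl => (hmem l).1 hl)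
        ⟨i, (hmem i).2 (Nat.le_succ _), Nat.lt_succ_self _⟩
    _ = #L * (f i (A i) + 1) := by rw [sum_const, smul_eq_mul]
    _ ≤ n * (f i (A i) + 1) := Nat.mul_le_mul_right _ (card_finset_fin_le L)

theorem lorenz_dominating_additive_dichotomous_is_maximin_fair_general
    (hf : ∀ i S, f i S = #(S ∩ D i)) (hA : IsAllocation A) (hLD : LorenzDominating f A)
    (i : Fin n) {P : Fin n → Finset I} (hP : IsAllocation P) :
    ∃ j, f i (P j) ≤ f i (A i) := by
  by_contra! hbetter
  refine (hLD.card_demand_lt hf hA i).not_ge ?_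
  calc n * (f i (A i) + 1) = ∑ _j : Fin n, (f i (A i) + 1) := by
        rw [sum_const, card_univ, Fintype.card_fin, smul_eq_mul]
    _ ≤ ∑ j, f i (P j) := sum_le_sum fun j _ => hbetter j
    _ = ∑ j, #(P j ∩ D i) := sum_congr rfl fun j _ => hf i (P j)
    _ ≤ #(D i) := hP.sum_card_inter_le (D i)

end Allocations

/-- A Lorenz dominating allocation for additive dichotomous valuations
(given by demand sets `D i`, so `f i S = |S ∩ D i|`) is maximin fair. -/
theorem lorenz_dominating_additive_dichotomous_is_maximin_fair
    {n : ℕ} {I : Type*} [DecidableEq I] [Fintype I]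
    (D : Fin n → Finset I)
    (f : Fin n → Finset I → ℕ) (hf : ∀ i S, f i S = (S ∩ D i).card)
    (A : Fin n → Finset I) (hA : IsAllocation A)
    (hLD : LorenzDominating f A) :
    ∀ i : Fin n, ∀ P : Fin n → Finset I, IsPartition P →
      ∃ j : Fin n, f i (P j) ≤ f i (A i) :=
  fun i _ hP => lorenz_dominating_additive_dichotomous_is_maximin_fair_general hf hA hLD i hP.1
end

section
/- For every n ≥ 2 there exist MRF (submodular dichotomous) valuations f_1,…,f_n on a finite item set M (one can take |M| = (2n−1)n) such that a Lorenz dominating allocation exists, yet in every Lorenz dominating allocation some agent receives a bundle whose value is strictly less than her maximin share; in particular no Lorenz dominating allocation is maximin fair. -/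
/-!
The items form a grid with `2n - 1` rows and `n` columns. The last `n - 1` rows are contested:
agents other than `0` value nothing else. Agent `0` can use at most `n - 1` contested and `n`
uncontested items. Since there are only `(n - 1)n` contested items, every allocation has welfare at
most `n²`, and giving each agent other than `0` a contested row attains it with all utilities equal
to `n`. Being equal and of maximal sum, these utilities Lorenz dominate all others, and they are
the only ones to do so. Agent `0` thus gets `n`, whereas every column of the grid is worth
`2n - 1 > n` to her.
-/

open Finset
open scoped Classical

variable {n : ℕ} {I : Type*} [DecidableEq I] [Fintype I]

section Lorenz

variable {α : Type*} [LinearOrder α]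

lemma coe_sortedVec (u : Fin n → α) : (sortedVec u : Multiset α) = univ.val.map u :=
  Multiset.sort_eq _ _

lemma pairwise_sortedVec (u : Fin n → α) : (sortedVec u).Pairwise (· ≤ ·) :=
  Multiset.pairwise_sort _ _

lemma length_sortedVec (u : Fin n → α) : (sortedVec u).length = n := by
  simp [sortedVec]

lemma mem_sortedVec {u : Fin n → α} {x : α} : x ∈ sortedVec u ↔ ∃ i, u i = x := by
  simp [sortedVec]

lemma sortedVec_const (c : α) : sortedVec (fun _ : Fin n => c) = List.replicate n c := by
  refine List.eq_replicate_iff.2 ⟨length_sortedVec _, fun x hx => ?_⟩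
  obtain ⟨-, rfl⟩ := mem_sortedVec.1 hx
  rfl

variable [AddCommMonoid α]

lemma sum_sortedVec (u : Fin n → α) : (sortedVec u).sum = ∑ i, u i := by
  rw [← Multiset.sum_coe, coe_sortedVec, sum_eq_multiset_sum]

lemma LorenzGE.le_of_const {u : Fin n → α} {c : α} (h : LorenzGE u fun _ => c) (i : Fin n) :
    c ≤ u i := by
  have hn : n ≠ 0 := (Fin.pos i).ne'
  have hhead := h 1
  have hsorted := pairwise_sortedVec u
  have hmem : u i ∈ sortedVec u := mem_sortedVec.2 ⟨i, rfl⟩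
  rw [sortedVec_const, List.take_replicate, Nat.min_eq_left (Nat.one_le_iff_ne_zero.2 hn)] at hhead
  cases hu : sortedVec u with
  | nil => simp [hu] at hmem
  | cons a l =>
    rw [hu] at hhead hsorted hmem
    have hca : c ≤ a := by simpa using hhead
    rcases List.mem_cons.1 hmem with heq | hl
    · exact hca.trans_eq heq.symm
    · exact hca.trans (List.rel_of_pairwise_cons hsorted hl)

variable [IsOrderedCancelAddMonoid α]

lemma sum_take_le_nsmul_of_sum_le {l : List α} {c : α} (hl : l.Pairwise (· ≤ ·))
    (hsum : l.sum ≤ l.length • c) (k : ℕ) : (l.take k).sum ≤ min k l.length • c := by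
  by_cases hsmall : ∀ x ∈ l.take k, x ≤ c
  · simpa using List.sum_le_card_nsmul _ c hsmall
  push Not at hsmall
  obtain ⟨x, hx, hcx⟩ := hsmall
  have hle : ∀ y ∈ l.drop k, x ≤ y := by
    rw [← List.take_append_drop k l, List.pairwise_append] at hl
    exact hl.2.2 x hx
  have hdrop : (l.length - k) • c ≤ (l.drop k).sum := by
    simpa using List.card_nsmul_le_sum (l.drop k) c fun y hy => hcx.le.trans (hle y hy)
  refine le_of_add_le_add_right (a := (l.drop k).sum) ?_
  calc (l.take k).sum + (l.drop k).sum = l.sum := List.sum_take_add_sum_drop l k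
    _ ≤ l.length • c := hsum
    _ = min k l.length • c + (l.length - k) • c := by rw [← add_nsmul]; congr 1; omega
    _ ≤ min k l.length • c + (l.drop k).sum := by gcongr

lemma lorenzGE_const_of_sum_le {v : Fin n → α} {c : α} (hv : ∑ i, v i ≤ n • c) :
    LorenzGE (fun _ => c) v := by
  intro k
  have hsum : (sortedVec v).sum ≤ (sortedVec v).length • c := by
    rwa [sum_sortedVec, length_sortedVec]
  have htake := sum_take_le_nsmul_of_sum_le (pairwise_sortedVec v) hsum k
  simpa [sortedVec_const, length_sortedVec] using htake

lemma LorenzGE.eq_const_of_sum_le {u : Fin n → α} {c : α} (h : LorenzGE u fun _ => c)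
    (hu : ∑ i, u i ≤ n • c) : u = fun _ => c := by
  have hle : ∑ _i : Fin n, c ≤ ∑ i, u i := sum_le_sum fun i _ => h.le_of_const i
  have heq : ∑ _i : Fin n, c = ∑ i, u i := hle.antisymm (by simpa using hu)
  funext i
  exact ((sum_eq_sum_iff_of_le fun i _ => h.le_of_const i).1 heq i (mem_univ i)).symm

end Lorenz

section EqualUtilities

variable {ι : Type*} {f : Fin n → Finset ι → ℕ} {c : ℕ}

lemma lorenzDominating_of_util_eq_const {A : Fin n → Finset ι} (hA : util f A = fun _ => c)
    (hf : ∀ B, IsAllocation B → ∑ i, util f B i ≤ n * c) : LorenzDominating f A := by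
  intro B hB
  rw [hA]
  exact lorenzGE_const_of_sum_le (hf B hB)

lemma LorenzDominating.util_eq_const {A E : Fin n → Finset ι} (hL : LorenzDominating f A)
    (hE : IsAllocation E) (hc : util f E = fun _ => c) (hA : ∑ i, util f A i ≤ n * c) :
    util f A = fun _ => c :=
  LorenzGE.eq_const_of_sum_le (hc ▸ hL E hE) hA

end EqualUtilities

section MatroidRank

variable {ι : Type*} [DecidableEq ι]

/-- The rank function of the uniform matroid of rank `k`. -/
def uniformRank (k : ℕ) (S : Finset ι) : ℕ := min k #S

lemma isMRF_uniformRank (k : ℕ) : IsMRF (uniformRank k : Finset ι → ℕ) where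
  empty := by simp [uniformRank]
  submod S T hST a := by
    have hcard := card_le_card hST
    have hmem : a ∈ S → a ∈ T := fun h => hST h
    simp only [uniformRank, card_insert_eq_ite]
    grind
  dichot S a := by
    simp only [uniformRank, card_insert_eq_ite]
    split_ifs <;> omega

lemma restrictVal_insert_of_mem (f : Finset ι → ℕ) {D : Finset ι} {a : ι} (ha : a ∈ D)
    (S : Finset ι) : restrictVal f D (insert a S) = f (insert a (S ∩ D)) := by
  rw [restrictVal, insert_inter_of_mem ha]

lemma restrictVal_insert_of_notMem (f : Finset ι → ℕ) {D : Finset ι} {a : ι} (ha : a ∉ D)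
    (S : Finset ι) : restrictVal f D (insert a S) = restrictVal f D S := by
  rw [restrictVal, restrictVal, insert_inter_of_notMem ha]

lemma isMRF_restrictVal {f : Finset ι → ℕ} (hf : IsMRF f) (D : Finset ι) :
    IsMRF (restrictVal f D) where
  empty := by simp [restrictVal, hf.empty]
  submod S T hST a := by
    by_cases ha : a ∈ D
    · simp only [restrictVal_insert_of_mem f ha]
      exact hf.submod _ _ (inter_subset_inter_right hST) a
    · simp only [restrictVal_insert_of_notMem f ha, add_comm, le_refl]
  dichot S a := by
    by_cases ha : a ∈ D
    · rw [restrictVal_insert_of_mem f ha]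
      exact hf.dichot (S ∩ D) a
    · exact .inl (restrictVal_insert_of_notMem f ha S)

lemma isMRF_restrictVal_add_restrictVal {f g : Finset ι → ℕ} (hf : IsMRF f) (hg : IsMRF g)
    {D E : Finset ι} (hDE : Disjoint D E) :
    IsMRF (restrictVal f D + restrictVal g E) where
  empty := by simp [(isMRF_restrictVal hf D).empty, (isMRF_restrictVal hg E).empty]
  submod S T hST a := by
    have hfD := (isMRF_restrictVal hf D).submod S T hST a
    have hgE := (isMRF_restrictVal hg E).submod S T hST a
    simp only [Pi.add_apply]
    omega
  dichot S a := by
    simp only [Pi.add_apply]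
    by_cases ha : a ∈ D
    · rw [restrictVal_insert_of_notMem g (disjoint_left.1 hDE ha)]
      have hfD := (isMRF_restrictVal hf D).dichot S a
      omega
    · rw [restrictVal_insert_of_notMem f ha]
      have hgE := (isMRF_restrictVal hg E).dichot S a
      omega

end MatroidRank

section ContestedItems

/-- The valuations of an instance in which the items of `C` are contested: agent `o` can use `a`
items of `C` and `b` other items, the remaining agents can use `b` items of `C` and nothing else. -/
def contestedVal (C : Finset I) (a b : ℕ) (o i : Fin n) : Finset I → ℕ :=
  if i = o then restrictVal (uniformRank a) C + restrictVal (uniformRank b) Cᶜ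
  else restrictVal (uniformRank b) C

variable (C : Finset I) (a b : ℕ) {o i : Fin n}

lemma contestedVal_self (S : Finset I) :
    contestedVal C a b o o S = min a #(S ∩ C) + min b #(S ∩ Cᶜ) := by
  simp [contestedVal, restrictVal, uniformRank]

lemma contestedVal_of_ne (hi : i ≠ o) (S : Finset I) :
    contestedVal C a b o i S = min b #(S ∩ C) := by
  simp [contestedVal, restrictVal, uniformRank, hi]

lemma isMRF_contestedVal (o i : Fin n) : IsMRF (contestedVal C a b o i) := by
  unfold contestedVal
  split_ifs
  · exact isMRF_restrictVal_add_restrictVal (isMRF_uniformRank a) (isMRF_uniformRank b)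
      disjoint_compl_right
  · exact isMRF_restrictVal (isMRF_uniformRank b) C

lemma contestedVal_le (o i : Fin n) (S : Finset I) :
    contestedVal C a b o i S ≤ #(S ∩ C) + if i = o then b else 0 := by
  split_ifs with hi
  · subst hi
    rw [contestedVal_self]
    exact add_le_add (min_le_right _ _) (min_le_left _ _)
  · rw [contestedVal_of_ne C a b hi]
    exact min_le_right _ _

lemma IsAllocation.sum_card_inter_le_s3 {ι : Type*} [DecidableEq ι] {B : Fin n → Finset ι}
    (hB : IsAllocation B) (D : Finset ι) : ∑ i, #(B i ∩ D) ≤ #D := by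
  rw [← card_biUnion fun i _ j _ hij => (hB i j hij).mono inter_subset_left inter_subset_left]
  exact card_le_card (biUnion_subset.2 fun _ _ => inter_subset_right)

lemma IsAllocation.sum_util_contestedVal_le {B : Fin n → Finset I} (hB : IsAllocation B)
    (o : Fin n) : ∑ i, util (contestedVal C a b o) B i ≤ #C + b :=
  calc ∑ i, util (contestedVal C a b o) B i
      ≤ ∑ i, (#(B i ∩ C) + if i = o then b else 0) :=
        sum_le_sum fun i _ => contestedVal_le C a b o i (B i)
    _ = ∑ i, #(B i ∩ C) + b := by simp [sum_add_distrib]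
    _ ≤ #C + b := Nat.add_le_add_right (hB.sum_card_inter_le_s3 C) b

end ContestedItems

lemma isPartition_fibers {ι : Type*} [Fintype ι] (g : ι → Fin n) :
    IsPartition fun i => ({x | g x = i} : Finset ι) := by
  refine ⟨fun i j hij => disjoint_left.2 fun x hi hj => hij ?_, fun x => ⟨g x, by simp⟩⟩
  exact (mem_filter.1 hi).2.symm.trans (mem_filter.1 hj).2

section Grid

lemma card_filter_divNat_modNat {k l : ℕ} (p : Fin k → Prop) (q : Fin l → Prop)
    [DecidablePred p] [DecidablePred q] :
    #{x : Fin (k * l) | p x.divNat ∧ q x.modNat} = #{r | p r} * #{s | q s} := by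
  rw [← card_product, ← filter_product, univ_product_univ]
  exact card_equiv finProdFinEquiv.symm fun x => by simp

lemma card_filter_divNat {k l : ℕ} (p : Fin k → Prop) [DecidablePred p] :
    #{x : Fin (k * l) | p x.divNat} = #{r | p r} * l := by
  simpa using card_filter_divNat_modNat p fun _ : Fin l => True

/-- The agent to whom a row of the grid is given in the allocation with equal utilities. The
truncated subtraction sends the first `n` rows to agent `0` and row `n - 1 + i` to agent `i`. -/
def rowOwner (r : Fin (2 * n - 1)) : Fin n := ⟨r - (n - 1), by omega⟩

/-- The bundle of agent `i` in the allocation with equal utilities, a union of rows of the grid.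
Item `x` lies in row `x.divNat` and column `x.modNat`. -/
def rowBundle (i : Fin n) : Finset (Fin ((2 * n - 1) * n)) := {x | rowOwner x.divNat = i}

/-- Column `j` of the grid, the `j`-th bundle of a maximin partition for agent `0`. -/
def columnBundle (j : Fin n) : Finset (Fin ((2 * n - 1) * n)) := {x | x.modNat = j}

variable [NeZero n]

variable (n) in
/-- The items that agents other than `0` value, which are those in the rows these agents own. -/
def contestedItems : Finset (Fin ((2 * n - 1) * n)) := {x | rowOwner x.divNat ≠ 0}

variable (n) in
/-- The valuations of the instance: agent `0` can use `n - 1` contested and `n` uncontested items,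
the remaining agents can use `n` contested items. -/
def gridVal : Fin n → Finset (Fin ((2 * n - 1) * n)) → ℕ :=
  contestedVal (contestedItems n) (n - 1) n 0

variable (n) in
lemma card_rowOwner_eq_zero : #{r : Fin (2 * n - 1) | rowOwner r = 0} = n := by
  have hn := NeZero.pos n
  have hiff (r : Fin (2 * n - 1)) : rowOwner r = 0 ↔ r.val < n := by
    simp only [rowOwner, Fin.ext_iff, Fin.val_zero]
    omega
  simp only [hiff, Fin.card_filter_val_lt]
  omega

variable (n) in
lemma card_rowOwner_ne_zero : #{r : Fin (2 * n - 1) | rowOwner r ≠ 0} = n - 1 := by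
  have hsum := card_filter_add_card_filter_not (s := univ) fun r : Fin (2 * n - 1) => rowOwner r = 0
  rw [card_rowOwner_eq_zero, card_univ, Fintype.card_fin] at hsum
  simp only [ne_eq]
  omega

lemma card_rowOwner_eq {i : Fin n} (hi : i ≠ 0) : #{r | rowOwner r = i} = 1 := by
  have hi' := Fin.val_ne_zero_iff.2 hi
  refine card_eq_one.2 ⟨⟨n - 1 + i, by omega⟩, ?_⟩
  ext r
  simp only [rowOwner, mem_filter_univ, mem_singleton, Fin.ext_iff]
  omega

variable (n) in
lemma card_contestedItems : #(contestedItems n) = (n - 1) * n := by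
  rw [contestedItems, card_filter_divNat fun r => rowOwner r ≠ 0, card_rowOwner_ne_zero]

lemma sum_util_gridVal_le {B : Fin n → Finset (Fin ((2 * n - 1) * n))} (hB : IsAllocation B) :
    ∑ i, util (gridVal n) B i ≤ n * n := by
  have hn := NeZero.pos n
  calc ∑ i, util (gridVal n) B i ≤ #(contestedItems n) + n := hB.sum_util_contestedVal_le _ _ _ 0
    _ = (n - 1 + 1) * n := by rw [card_contestedItems, add_one_mul]
    _ = n * n := by rw [Nat.sub_add_cancel hn]

variable (n) in
lemma util_gridVal_rowBundle : util (gridVal n) rowBundle = fun _ => n := by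
  funext i
  have hn := NeZero.pos n
  rcases eq_or_ne i 0 with rfl | hi
  · have hinter : rowBundle 0 ∩ contestedItems n = ∅ := by
      ext x
      simp [rowBundle, contestedItems]
    have hcompl : rowBundle 0 ∩ (contestedItems n)ᶜ = rowBundle 0 := by
      ext x
      simp [rowBundle, contestedItems]
    have hcard : #(rowBundle (0 : Fin n)) = n * n := by
      rw [rowBundle, card_filter_divNat fun r => rowOwner r = 0, card_rowOwner_eq_zero]
    rw [util, gridVal, contestedVal_self, hinter, hcompl, hcard]
    simpa using Nat.le_mul_of_pos_left n hn
  · have hinter : rowBundle i ∩ contestedItems n = rowBundle i := by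
      refine inter_eq_left.2 fun x hx => ?_
      simp_all [rowBundle, contestedItems]
    have hcard : #(rowBundle i) = n := by
      rw [rowBundle, card_filter_divNat fun r => rowOwner r = i, card_rowOwner_eq hi, one_mul]
    rw [util, gridVal, contestedVal_of_ne _ _ _ hi, hinter, hcard, min_self]

lemma gridVal_zero_columnBundle (j : Fin n) : gridVal n 0 (columnBundle j) = n - 1 + n := by
  have hinter : #(columnBundle j ∩ contestedItems n) = n - 1 := by
    simpa [columnBundle, contestedItems, ← filter_and, and_comm, filter_eq',
      card_rowOwner_ne_zero] using
      card_filter_divNat_modNat (fun r : Fin (2 * n - 1) => rowOwner r ≠ 0) (· = j)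
  have hcompl : #(columnBundle j ∩ (contestedItems n)ᶜ) = n := by
    simpa [columnBundle, contestedItems, compl_filter, ← filter_and, and_comm, filter_eq',
      card_rowOwner_eq_zero] using
      card_filter_divNat_modNat (fun r : Fin (2 * n - 1) => rowOwner r = 0) (· = j)
  rw [gridVal, contestedVal_self, hinter, hcompl, min_self, min_self]

end Grid

/-- For every `n ≥ 2` there are MRF valuations on a set of `(2n−1)·n` items such that
a Lorenz dominating allocation exists, yet in every Lorenz dominating allocation some
agent's value falls strictly short of her maximin share. -/
theorem lorenz_dominating_not_maximin_fair (n : ℕ) (hn : 2 ≤ n) :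
    ∃ f : Fin n → Finset (Fin ((2 * n - 1) * n)) → ℕ,
      (∀ i, IsMRF (f i)) ∧
      (∃ A : Fin n → Finset (Fin ((2 * n - 1) * n)),
        IsAllocation A ∧ LorenzDominating f A) ∧
      (∀ A : Fin n → Finset (Fin ((2 * n - 1) * n)),
        IsAllocation A → LorenzDominating f A →
        ∃ i : Fin n, ∃ P : Fin n → Finset (Fin ((2 * n - 1) * n)),
          IsPartition P ∧ ∀ j : Fin n, f i (A i) < f i (P j)) := by
  have : NeZero n := ⟨by omega⟩
  have hrow : IsAllocation (rowBundle : Fin n → _) :=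
    (isPartition_fibers fun x : Fin ((2 * n - 1) * n) => rowOwner x.divNat).1
  refine ⟨gridVal n, isMRF_contestedVal _ _ _ 0, ⟨rowBundle, hrow, ?_⟩, fun A hA hL => ?_⟩
  · exact lorenzDominating_of_util_eq_const (util_gridVal_rowBundle n) fun _ => sum_util_gridVal_le
  refine ⟨0, columnBundle, isPartition_fibers Fin.modNat, fun j => ?_⟩
  have hA0 : gridVal n 0 (A 0) = n := congrFun
    (hL.util_eq_const hrow (util_gridVal_rowBundle n) (sum_util_gridVal_le hA)) 0
  rw [hA0, gridVal_zero_columnBundle]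
  omega
end
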